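/- arXiv:1808.02148 — 3 statements merged into one kernel-verified Lean document; each statement's English description precedes it below -/
import Mathlib

section
/- Let a, b be distinct square-free integers not equal to 0 or 1 with 𝓕_{4,a}(a,b) ≠ ∅, and let (g₀,h₀,n₀) be a fixed triple of integers with h₀, n₀ > 0, g₀ ≥ 0 and g₀² − h₀²·a = n₀²·b. Then for every X ≥ 1 and every m ∈ M_a(a,b;X), the field K_[m] = ℚ(√(g₀m + h₀m√a)) lies in 𝓕_{4,a}(a,b) and satisfies D_{K_[m]} ≤ X; i.e., T_a(a,b;X) ⊆ 𝓕_{4,a}(a,b;X). -/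
/-!
Put `s = √a`, `u = √b` and `t = √(g₀m + h₀m√a)`. The norm of `t²` from `ℚ(√a)` to `ℚ` is
`(n₀m)² b`, so the conjugates of `t` are `±t` and `±t'` with `t' = n₀ m u / t`, and the Galois
closure of `ℚ(t)` is `ℚ(t, u)`, of degree at most `8`. Square-freeness of `a ≠ b`, both different
from `1`, makes `ℚ(s, u)` biquadratic, and lifting its automorphisms yields a rotation
`ρ : t ↦ t' ↦ -t` and a reflection `σ` fixing `t` and negating `t'` (`D4Data.exists_rho`,
`D4Data.exists_sigma`). They satisfy the relations of `D₄`, hence the closure has degree exactly `8`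
and group `D₄` (`dihedral_gal`, `D4Data.main_gal`).

The quadratic subfields of the closure are `ℚ(s)`, `ℚ(u)` and `ℚ(su)` (`D4Data.quadratic_cases`).
The first lies in `ℚ(t)`, and the second in the mirror field `ℚ(t + t')`, which satisfies the same
hypotheses with `a` and `b` exchanged (`D4Data.mirror`). The third lies in no `D₄`-quartic subfield
of the closure: a quartic field containing `su` is fixed by the central involution, and then so is
its Galois closure (`D4Data.su_notMem_of_isD4`). This gives membership in `𝓕_{4,a}(a,b)`
(`D4Data.mem_F4a`).

For the discriminant, `1, s, t, st` are algebraic integers whose trace form has determinant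
`256 a² (n₀m)² b` (`D4Data.natAbs_discr_le`), and the bound on `m` makes this at most `X` in
absolute value (`disc_bound`).
-/

open IntermediateField

noncomputable section

abbrev Qbar : Type := AlgebraicClosure ℚ

noncomputable def galCl (K : IntermediateField ℚ Qbar) : IntermediateField ℚ Qbar :=
  normalClosure ℚ K Qbar

def IsD4Quartic (K : IntermediateField ℚ Qbar) : Prop :=
  Module.finrank ℚ K = 4 ∧
    Nonempty ((galCl K ≃ₐ[ℚ] galCl K) ≃* DihedralGroup 4)

open scoped Classical in
noncomputable def absDisc (K : IntermediateField ℚ Qbar) : ℕ :=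
  if h : FiniteDimensional ℚ K then
    haveI := h
    haveI : NumberField K := ⟨⟩
    (NumberField.discr K).natAbs
  else 0

def F4 (Q : IntermediateField ℚ Qbar) : Set (IntermediateField ℚ Qbar) :=
  {K | IsD4Quartic K ∧ Q ≤ galCl K}

def F4X (Q : IntermediateField ℚ Qbar) (X : ℝ) : Set (IntermediateField ℚ Qbar) :=
  {K | K ∈ F4 Q ∧ (absDisc K : ℝ) ≤ X}

noncomputable def torsionCount (K : IntermediateField ℚ Qbar) (ℓ : ℕ) : ℕ :=
  Nat.card {x : ClassGroup (NumberField.RingOfIntegers K) // x ^ ℓ = 1}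

/-- `F` is an extended quadratic field of the `D₄`-quartic field `K`: a quadratic
subfield of the Galois closure `K̃` which occurs as the (unique) quadratic subfield of
some `D₄`-quartic field contained in `K̃`. -/
def ExtendedQuadratic (K F : IntermediateField ℚ Qbar) : Prop :=
  F ≤ galCl K ∧ Module.finrank ℚ F = 2 ∧
    ∃ K' : IntermediateField ℚ Qbar, IsD4Quartic K' ∧ K' ≤ galCl K ∧ F ≤ K'

/-- The family `𝓕₄(a,b)` (for fixed square roots `sa` of `a` and `sb` of `b`): the
`D₄`-quartic fields whose Galois closure contains `ℚ(√a,√b)` and whose extended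
quadratic fields are exactly `ℚ(√a)` and `ℚ(√b)`. -/
def F4ab (sa sb : Qbar) : Set (IntermediateField ℚ Qbar) :=
  {K | IsD4Quartic K ∧ adjoin ℚ {sa, sb} ≤ galCl K ∧
    ∀ F : IntermediateField ℚ Qbar,
      ExtendedQuadratic K F ↔ (F = adjoin ℚ {sa} ∨ F = adjoin ℚ {sb})}

/-- The subfamily `𝓕_{4,a}(a,b)`: fields in `𝓕₄(a,b)` whose unique quadratic subfield
is `ℚ(√a)`. -/
def F4a (sa sb : Qbar) : Set (IntermediateField ℚ Qbar) :=
  {K | K ∈ F4ab sa sb ∧ adjoin ℚ {sa} ≤ K ∧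
    ∀ F : IntermediateField ℚ Qbar,
      F ≤ K → Module.finrank ℚ F = 2 → F = adjoin ℚ {sa}}

/-- The set `M_a(a,b;X)` of square-free positive integers `m` coprime to `|ab|` with
`m ≤ X^{1/2} / (16 n₀ √(|a|³|b|³))`. -/
def Mset (a b n₀ : ℤ) (X : ℝ) : Set ℕ :=
  {m : ℕ | Squarefree m ∧ 0 < m ∧ Nat.Coprime m (a * b).natAbs ∧
    (m : ℝ) ≤ Real.sqrt X /
      (16 * (n₀ : ℝ) * Real.sqrt ((a.natAbs : ℝ) ^ 3 * (b.natAbs : ℝ) ^ 3))}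

/-- The set `T_a(a,b;X) = {K_[m] = ℚ(√(g₀m + h₀m√a)) : m ∈ M_a(a,b;X)}`. -/
def Tset (sa : Qbar) (a b g₀ h₀ n₀ : ℤ) (X : ℝ) : Set (IntermediateField ℚ Qbar) :=
  {K | ∃ m ∈ Mset a b n₀ X, ∃ t : Qbar,
    t ^ 2 = ((g₀ * m : ℤ) : Qbar) + ((h₀ * m : ℤ) : Qbar) * sa ∧ K = adjoin ℚ {t}}

/-! ### The quartic generator and its conjugates -/

/-- The data of a quartic generator `t = √(G + H√a)` with `s = √a`, `u = √b` and norm condition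
`G² - H² a = N² b`, where none of `√a`, `√b`, `√a√b` is rational (membership in `⊥`). Since
`(G + H√a)(G - H√a) = N² b`, the conjugate `√(G - H√a)` of `t` is `N u / t`; all formulas below
use this expression for it. -/
structure D4Data (a b G H N : ℚ) (s u t : Qbar) : Prop where
  sq_s : s ^ 2 = (a : Qbar)
  sq_u : u ^ 2 = (b : Qbar)
  sq_t : t ^ 2 = (G : Qbar) + (H : Qbar) * s
  norm : G ^ 2 - H ^ 2 * a = N ^ 2 * b
  H_ne : H ≠ 0
  N_ne : N ≠ 0
  s_irr : s ∉ (⊥ : IntermediateField ℚ Qbar)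
  u_irr : u ∉ (⊥ : IntermediateField ℚ Qbar)
  su_irr : s * u ∉ (⊥ : IntermediateField ℚ Qbar)

/-- The `ℚ`-algebra structure found on `Qbar` is that of a field of characteristic zero, not the
one carried by `AlgebraicClosure`; they agree because `ℚ`-algebra structures are unique. -/
instance instIsAlgebraicQbar : Algebra.IsAlgebraic ℚ Qbar := by
  have h := AlgebraicClosure.isAlgebraic ℚ
  convert h
  · rfl
  · exact Subsingleton.elim _ _

instance instIsAlgClosureQbar : IsAlgClosure ℚ Qbar :=
  ⟨AlgebraicClosure.isAlgClosed ℚ, inferInstance⟩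

instance instIsGaloisQbar : IsGalois ℚ Qbar := IsAlgClosure.isGalois ℚ Qbar

lemma ratCast_mem_field (F : IntermediateField ℚ Qbar) (q : ℚ) : (q : Qbar) ∈ F := by
  have := F.algebraMap_mem q
  rwa [eq_ratCast] at this

lemma exists_moves {x : Qbar} (hx : x ∉ (⊥ : IntermediateField ℚ Qbar)) :
    ∃ φ : Qbar ≃ₐ[ℚ] Qbar, φ x ≠ x := by
  by_contra! h
  exact hx ((InfiniteGalois.mem_bot_iff_fixed x).2 h)

lemma map_sqrt {x : Qbar} {q : ℚ} (hx : x ^ 2 = (q : Qbar)) (φ : Qbar ≃ₐ[ℚ] Qbar) :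
    φ x = x ∨ φ x = -x := by
  apply sq_eq_sq_iff_eq_or_eq_neg.1
  rw [← map_pow, hx, map_ratCast]

lemma agree_of_agree_gens {t u : Qbar} {φ ψ : Qbar ≃ₐ[ℚ] Qbar} (ht : φ t = ψ t) (hu : φ u = ψ u)
    {x : Qbar} (hx : x ∈ adjoin ℚ {t, u}) : φ x = ψ x := by
  induction hx using IntermediateField.adjoin_induction with
  | mem x hx =>
    rcases hx with rfl | hx
    · exact ht
    · rw [Set.mem_singleton_iff] at hx; rw [hx, hu]
  | algebraMap x => simp
  | add x y _ _ hx hy => simp [hx, hy]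
  | inv x _ hx => simp [hx]
  | mul x y _ _ hx hy => simp [hx, hy]

lemma finrank_adjoin_le {x : Qbar} (p : Polynomial ℚ) (hp : p.Monic)
    (hx : Polynomial.aeval x p = 0) :
    Module.finrank ℚ (adjoin ℚ {x}) ≤ p.natDegree := by
  have hi : IsIntegral ℚ x := ⟨p, hp, hx⟩
  rw [adjoin.finrank hi]
  exact Polynomial.natDegree_le_natDegree (minpoly.min ℚ x hp hx)

lemma finrank_adjoin_ne_one {x : Qbar} (hx : x ∉ (⊥ : IntermediateField ℚ Qbar)) :
    Module.finrank ℚ (adjoin ℚ {x}) ≠ 1 := by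
  intro h
  rw [IntermediateField.finrank_eq_one_iff] at h
  exact hx (h ▸ mem_adjoin_simple_self ℚ x)

lemma finrank_adjoin_pos (x : Qbar) : 0 < Module.finrank ℚ (adjoin ℚ {x}) := by
  have := adjoin.finiteDimensional (Algebra.IsIntegral.isIntegral (R := ℚ) x)
  exact Module.finrank_pos

lemma finrank_adjoin_sqrt_le {x : Qbar} {q : ℚ} (hx : x ^ 2 = (q : Qbar)) :
    Module.finrank ℚ (adjoin ℚ {x}) ≤ 2 := by
  have := finrank_adjoin_le (x := x) (Polynomial.X ^ 2 - Polynomial.C q)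
    (Polynomial.monic_X_pow_sub_C q two_ne_zero) (by simp [hx])
  rwa [Polynomial.natDegree_X_pow_sub_C] at this

lemma finrank_adjoin_sqrt {x : Qbar} {q : ℚ} (hx : x ^ 2 = (q : Qbar))
    (hirr : x ∉ (⊥ : IntermediateField ℚ Qbar)) :
    Module.finrank ℚ (adjoin ℚ {x}) = 2 := by
  have := finrank_adjoin_sqrt_le hx
  have := finrank_adjoin_ne_one hirr
  have := finrank_adjoin_pos x
  omega

lemma eq_adjoin_of_finrank_two {F : IntermediateField ℚ Qbar} (hF : Module.finrank ℚ F = 2)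
    {x : Qbar} (hx : x ∈ F) (hirr : x ∉ (⊥ : IntermediateField ℚ Qbar)) :
    F = adjoin ℚ {x} := by
  have : FiniteDimensional ℚ F := Module.finite_of_finrank_pos (by omega)
  have hle : adjoin ℚ {x} ≤ F := adjoin_simple_le_iff.2 hx
  symm
  apply IntermediateField.eq_of_le_of_finrank_le hle
  have := finrank_adjoin_ne_one hirr
  have := finrank_adjoin_pos x
  omega

/-- A quadratic field is generated by an irrational square root of a rational number (complete the
square in the minimal polynomial of any irrational element). -/
lemma exists_sqrt_of_finrank_two {F : IntermediateField ℚ Qbar} (hF : Module.finrank ℚ F = 2) :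
    ∃ d ∈ F, d ∉ (⊥ : IntermediateField ℚ Qbar) ∧ ∃ q : ℚ, d ^ 2 = (q : Qbar) := by
  have hne : F ≠ ⊥ := by
    rintro rfl
    simp at hF
  obtain ⟨x, hxF, hx⟩ := SetLike.exists_of_lt (bot_lt_iff_ne_bot.2 hne)
  have hi : IsIntegral ℚ x := Algebra.IsIntegral.isIntegral x
  have hFx := eq_adjoin_of_finrank_two hF hxF hx
  rw [hFx, adjoin.finrank hi] at hF
  have hm := (minpoly.monic hi)
  have h0 := minpoly.aeval ℚ x
  rw [Polynomial.aeval_eq_sum_range, hF] at h0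
  have hl : (minpoly ℚ x).coeff 2 = 1 := by
    have := hm.coeff_natDegree
    rwa [hF] at this
  simp only [Finset.sum_range_succ, Finset.sum_range_zero, hl, Algebra.smul_def, eq_ratCast] at h0
  set p := (minpoly ℚ x).coeff 1
  set r := (minpoly ℚ x).coeff 0
  refine ⟨x + ((p / 2 : ℚ) : Qbar), add_mem hxF (ratCast_mem_field _ _), ?_, p ^ 2 / 4 - r, ?_⟩
  · intro h
    apply hx
    simpa using sub_mem h (ratCast_mem_field ⊥ (p / 2))
  · push_cast at h0 ⊢
    linear_combination h0

namespace D4Data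

variable {a b G H N : ℚ} {s u t : Qbar}

lemma HQ (D : D4Data a b G H N s u t) : (H : Qbar) ≠ 0 := by exact_mod_cast D.H_ne
lemma NQ (D : D4Data a b G H N s u t) : (N : Qbar) ≠ 0 := by exact_mod_cast D.N_ne
lemma normQ (D : D4Data a b G H N s u t) : (G : Qbar) ^ 2 - (H : Qbar) ^ 2 * (a : Qbar) = (N : Qbar) ^ 2 * (b : Qbar) := by
  exact_mod_cast congrArg (fun q : ℚ => (q : Qbar)) D.norm

lemma s_ne (D : D4Data a b G H N s u t) : s ≠ 0 := fun h => D.s_irr (h ▸ zero_mem _)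
lemma u_ne (D : D4Data a b G H N s u t) : u ≠ 0 := fun h => D.u_irr (h ▸ zero_mem _)

lemma s_eq (D : D4Data a b G H N s u t) : s = (t ^ 2 - (G : Qbar)) / (H : Qbar) := by
  have := D.HQ
  rw [D.sq_t]; field_simp; ring

lemma t_ne (D : D4Data a b G H N s u t) : t ≠ 0 := by
  rintro rfl
  apply D.s_irr
  rw [D.s_eq]
  exact div_mem (sub_mem (pow_mem (zero_mem _) _) (ratCast_mem_field _ _)) (ratCast_mem_field _ _)

/-- `N u / t` is a square root of the conjugate `G - H√a` of `t²`. -/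
lemma sq_conj (D : D4Data a b G H N s u t) : ((N : Qbar) * u / t) ^ 2 = (G : Qbar) - (H : Qbar) * s := by
  have := D.t_ne
  rw [div_pow, mul_pow, D.sq_u, ← D.normQ, ← D.sq_s]
  field_simp
  rw [D.sq_t]; ring

/-- The mirror field, with the roles of `a` and `b` exchanged: with `t' = N u / t` the conjugate of
`t`, one has `(t + t')² = 2 G + 2 N √b`, and `(2G)² - (2N)² b = (2H)² a`. -/
lemma mirror (D : D4Data a b G H N s u t) : D4Data b a (2 * G) (2 * N) (2 * H) u s (t + (N : Qbar) * u / t) where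
  sq_s := D.sq_u
  sq_u := D.sq_s
  sq_t := by
    have h1 : t * ((N : Qbar) * u / t) = N * u := by
      have := D.t_ne
      field_simp
    have h2 := D.sq_conj
    have h3 := D.sq_t
    push_cast
    linear_combination h2 + h3 + 2 * h1
  norm := by linear_combination 4 * D.norm
  H_ne := mul_ne_zero two_ne_zero D.N_ne
  N_ne := mul_ne_zero two_ne_zero D.H_ne
  s_irr := D.u_irr
  u_irr := D.s_irr
  su_irr := by rw [mul_comm]; exact D.su_irr

lemma map_s (D : D4Data a b G H N s u t) (φ : Qbar ≃ₐ[ℚ] Qbar) : φ s = s ∨ φ s = -s := map_sqrt D.sq_s φ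
lemma map_u (D : D4Data a b G H N s u t) (φ : Qbar ≃ₐ[ℚ] Qbar) : φ u = u ∨ φ u = -u := map_sqrt D.sq_u φ

lemma map_t_of_fix (D : D4Data a b G H N s u t) {φ : Qbar ≃ₐ[ℚ] Qbar} (h : φ s = s) : φ t = t ∨ φ t = -t := by
  apply sq_eq_sq_iff_eq_or_eq_neg.1
  rw [← map_pow, D.sq_t]; simp [h]

lemma map_t_of_neg (D : D4Data a b G H N s u t) {φ : Qbar ≃ₐ[ℚ] Qbar} (h : φ s = -s) :
    φ t = N * u / t ∨ φ t = -(N * u / t) := by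
  apply sq_eq_sq_iff_eq_or_eq_neg.1
  rw [← map_pow, D.sq_conj, D.sq_t]; simp [h]; ring

/-- Some automorphism moves `√b` and some automorphism moves `√a√b`; one of them, or their product,
fixes `√a` and negates `√b`. -/
lemma exists_fix_neg (D : D4Data a b G H N s u t) : ∃ φ : Qbar ≃ₐ[ℚ] Qbar, φ s = s ∧ φ u = -u := by
  obtain ⟨α, hα⟩ := exists_moves D.u_irr
  obtain ⟨β, hβ⟩ := exists_moves D.su_irr
  have h1 := (D.map_u α).resolve_left hα
  rcases D.map_s α with h2 | h2
  · exact ⟨α, h2, h1⟩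
  rcases D.map_s β with h3 | h3 <;> rcases D.map_u β with h4 | h4
  · simp [h3, h4] at hβ
  · exact ⟨β, h3, h4⟩
  · refine ⟨α * β, ?_, ?_⟩ <;> simp [AlgEquiv.mul_apply, h1, h2, h3, h4]
  · simp [h3, h4] at hβ

lemma exists_neg_neg (D : D4Data a b G H N s u t) : ∃ φ : Qbar ≃ₐ[ℚ] Qbar, φ s = -s ∧ φ u = -u := by
  obtain ⟨φ, h1, h2⟩ := D.exists_fix_neg
  obtain ⟨α, hα⟩ := exists_moves D.s_irr
  have h3 := (D.map_s α).resolve_left hα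
  rcases D.map_u α with h4 | h4
  · exact ⟨α * φ, by simp [AlgEquiv.mul_apply, h1, h3], by simp [AlgEquiv.mul_apply, h2, h4]⟩
  · exact ⟨α, h3, h4⟩

lemma map_conj (φ : Qbar ≃ₐ[ℚ] Qbar) : φ (N * u / t) = N * φ u / φ t := by simp

/-- An automorphism inducing the rotation `t ↦ t' ↦ -t ↦ -t'`, where `t' = N u / t`. An automorphism
negating both `√a` and `√b` is either this one or its inverse. -/
lemma exists_rho (D : D4Data a b G H N s u t) : ∃ ρ : Qbar ≃ₐ[ℚ] Qbar, ρ t = N * u / t ∧ ρ u = -u ∧ ρ s = -s := by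
  obtain ⟨φ, h1, h2⟩ := D.exists_neg_neg
  have hN := D.NQ
  have hu := D.u_ne
  have ht := D.t_ne
  rcases D.map_t_of_neg h1 with h | h
  · exact ⟨φ, h, h2, h1⟩
  · refine ⟨φ.symm, ?_, ?_, ?_⟩
    · rw [AlgEquiv.symm_apply_eq, map_conj, h, h2]; field_simp
    · rw [AlgEquiv.symm_apply_eq, map_neg, h2, neg_neg]
    · rw [AlgEquiv.symm_apply_eq, map_neg, h1, neg_neg]

/-- An automorphism inducing the reflection fixing `t` and negating `t'`. An automorphism fixing `√a`
and negating `√b` is this one, or else becomes it after conjugation by the rotation. -/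
lemma exists_sigma (D : D4Data a b G H N s u t) : ∃ σ : Qbar ≃ₐ[ℚ] Qbar, σ t = t ∧ σ u = -u ∧ σ s = s := by
  obtain ⟨φ, h1, h2⟩ := D.exists_fix_neg
  obtain ⟨ρ, r1, r2, r3⟩ := D.exists_rho
  have hN := D.NQ
  have hu := D.u_ne
  have ht := D.t_ne
  rcases D.map_t_of_fix h1 with h | h
  · exact ⟨φ, h, h2, h1⟩
  · refine ⟨ρ.symm * φ * ρ, ?_, ?_, ?_⟩ <;> simp only [AlgEquiv.mul_apply]
    · rw [AlgEquiv.symm_apply_eq, r1, map_conj, h, h2]; field_simp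
    · rw [AlgEquiv.symm_apply_eq, r2]; simp [h2, r2]
    · rw [AlgEquiv.symm_apply_eq, r3]; simp [h1]

end D4Data

/-! ### Recognising the dihedral group of order eight -/

/-- The homomorphism `D₄ → Γ` attached to `x, y ∈ Γ` with `x⁴ = y² = 1` and `x y x = y`. -/
def dihedralLift {Γ : Type*} [Group Γ] (x y : Γ) (hx : x ^ 4 = 1) (hy : y * y = 1)
    (hxy : x * y * x = y) : DihedralGroup 4 →* Γ := by
  have hadd : ∀ i j : ZMod 4, x ^ (i + j).val = x ^ i.val * x ^ j.val := by
    intro i j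
    rw [← pow_add, ZMod.val_add, ← pow_mod_orderOf, eq_comm, ← pow_mod_orderOf,
      Nat.mod_mod_of_dvd _ (orderOf_dvd_of_pow_eq_one hx)]
  have hyx : ∀ n : ℕ, x ^ n * y * x ^ n = y := by
    intro n
    induction n with
    | zero => simp
    | succ n ih =>
      calc x ^ (n + 1) * y * x ^ (n + 1) = x ^ n * (x * y * x) * x ^ n := by
            rw [pow_succ]; nth_rewrite 2 [← pow_succ]; rw [pow_succ']; group
        _ = y := by rw [hxy, ih]
  have hsub : ∀ i j : ZMod 4, x ^ i.val * x ^ (j - i).val = x ^ j.val := by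
    intro i j
    rw [← hadd, add_sub_cancel]
  exact
  { toFun := fun d => match d with
      | .r i => x ^ i.val
      | .sr i => y * x ^ i.val
    map_one' := by
      change x ^ (0 : ZMod 4).val = 1
      simp
    map_mul' := by
      rintro (i | i) (j | j)
      · exact hadd i j
      · change y * x ^ (j - i).val = x ^ i.val * (y * x ^ j.val)
        rw [← hsub i j]
        calc _ = (x ^ i.val * y * x ^ i.val) * x ^ (j - i).val := by rw [hyx]
          _ = _ := by simp only [mul_assoc]
      · change y * x ^ (i + j).val = y * x ^ i.val * x ^ j.val
        rw [hadd, mul_assoc]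
      · change x ^ (j - i).val = y * x ^ i.val * (y * x ^ j.val)
        rw [← hsub i j]
        calc _ = (y * y) * x ^ (j - i).val := by rw [hy, one_mul]
          _ = y * (x ^ i.val * y * x ^ i.val) * x ^ (j - i).val := by rw [hyx]
          _ = _ := by simp only [mul_assoc] }

/-- `dihedralLift` is injective as soon as `x²` is nontrivial and `y` is not the inverse of a power
of `x`. -/
lemma dihedralLift_injective {Γ : Type*} [Group Γ] (x y : Γ) (hx : x ^ 4 = 1) (hy : y * y = 1)
    (hxy : x * y * x = y) (hx2 : x ^ 2 ≠ 1) (hyx : ∀ n : ℕ, y * x ^ n ≠ 1) :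
    Function.Injective (dihedralLift x y hx hy hxy) := by
  rw [injective_iff_map_eq_one]
  rintro (i | i) h
  · change x ^ i.val = 1 at h
    have h4 : i.val < 4 := i.val_lt
    have : i.val = 0 := by
      generalize i.val = n at h h4
      interval_cases n
      · rfl
      · simp [pow_one] at h; simp [h] at hx2
      · exact absurd h hx2
      · refine absurd ?_ hx2
        have : x = 1 := by
          rw [show 4 = 3 + 1 from rfl, pow_add, h] at hx
          simpa using hx
        simp [this]
    rw [(ZMod.val_eq_zero i).1 this]
    rfl
  · exact absurd h (hyx i.val)

section Generic

variable {k E : Type*} [Field k] [Field E] [Algebra k E]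

lemma card_eq_eight_of_mulEquiv {Γ : Type*} [Group Γ] (h : Nonempty (Γ ≃* DihedralGroup 4)) :
    Nat.card Γ = 8 := by
  obtain ⟨e⟩ := h
  rw [Nat.card_congr e.toEquiv, DihedralGroup.nat_card]

lemma finrank_eq_eight_of_gal (L : IntermediateField k E) [FiniteDimensional k L] [IsGalois k L]
    (h : Nonempty ((L ≃ₐ[k] L) ≃* DihedralGroup 4)) : Module.finrank k L = 8 := by
  rw [← IsGalois.card_aut_eq_finrank, card_eq_eight_of_mulEquiv h]

/-- If a normal extension `L/k` of degree at most `8` admits automorphisms `ρ`, `σ` satisfying the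
relations of `D₄`, with `ρ² ≠ 1` and `σ` outside `⟨ρ⟩`, then they generate the whole Galois group,
which is `D₄`. The automorphisms and the relations are given on the ambient normal extension `E`;
the last conclusion says that an element of `L` fixed by `ρ` and `σ` is fixed by all of `Gal(E/k)`. -/
lemma dihedral_gal (L : IntermediateField k E) [Normal k E] [Normal k L] [FiniteDimensional k L]
    (hL : Module.finrank k L ≤ 8) (ρ σ : E ≃ₐ[k] E)
    (h4 : ∀ x ∈ L, ρ (ρ (ρ (ρ x))) = x) (hσ : ∀ x ∈ L, σ (σ x) = x)
    (hrel : ∀ x ∈ L, ρ (σ (ρ x)) = σ x) (h2 : ∃ x ∈ L, ρ (ρ x) ≠ x)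
    (hn : ∀ n : ℕ, ∃ x ∈ L, σ ((ρ ^ n) x) ≠ x) :
    Nonempty ((L ≃ₐ[k] L) ≃* DihedralGroup 4) ∧ Module.finrank k L = 8 ∧
      ∀ φ : E ≃ₐ[k] E, ∀ x ∈ L, ρ x = x → σ x = x → φ x = x := by
  let R := AlgEquiv.restrictNormalHom (F := k) (K₁ := E) L
  have hR : ∀ φ : E ≃ₐ[k] E, R φ = 1 ↔ ∀ x ∈ L, φ x = x := by
    intro φ
    rw [← MonoidHom.mem_ker, IntermediateField.restrictNormalHom_ker,
      IntermediateField.mem_fixingSubgroup_iff]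
  have e1 : R ρ ^ 4 = 1 := by
    rw [← map_pow, hR]; intro x hx; simpa [pow_succ, AlgEquiv.mul_apply] using h4 x hx
  have e2 : R σ * R σ = 1 := by
    rw [← map_mul, hR]; exact hσ
  have e3 : R ρ * R σ * R ρ = R σ := by
    rw [← map_mul, ← map_mul, ← mul_inv_eq_one, ← map_inv, ← map_mul, hR]
    intro x hx
    have hm : σ⁻¹ x ∈ L := by
      have : σ⁻¹ x = σ x := by
        change σ.symm x = σ x
        rw [AlgEquiv.symm_apply_eq, hσ x hx]
      rw [this, ← AlgEquiv.restrictNormalHom_apply L σ ⟨x, hx⟩]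
      exact SetLike.coe_mem _
    have := hrel _ hm
    rw [show σ (σ⁻¹ x) = x from σ.apply_symm_apply x] at this
    exact this
  have e4 : R ρ ^ 2 ≠ 1 := by
    rw [← map_pow, Ne, hR]
    intro h
    obtain ⟨x, hx, hne⟩ := h2
    exact hne (h x hx)
  have e5 : ∀ n : ℕ, R σ * R ρ ^ n ≠ 1 := by
    intro n
    rw [← map_pow, ← map_mul, Ne, hR]
    intro h
    obtain ⟨x, hx, hne⟩ := hn n
    exact hne (h x hx)
  let f := dihedralLift (R ρ) (R σ) e1 e2 e3
  have hf : Function.Injective f := dihedralLift_injective _ _ e1 e2 e3 e4 e5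
  have hcard : Nat.card (L ≃ₐ[k] L) ≤ Module.finrank k L := by
    rw [Nat.card_eq_fintype_card]
    exact AlgEquiv.card_le
  have h8 : 8 ≤ Nat.card (L ≃ₐ[k] L) := by
    have := Nat.card_le_card_of_injective f hf
    rwa [DihedralGroup.nat_card] at this
  have hbij : Function.Bijective f := by
    rw [Nat.bijective_iff_injective_and_card]
    refine ⟨hf, ?_⟩
    rw [DihedralGroup.nat_card]
    omega
  refine ⟨⟨(MulEquiv.ofBijective f hbij).symm⟩, by omega, ?_⟩
  intro φ x hx hρx hσx
  have key : ∀ d, (f d) ⟨x, hx⟩ = ⟨x, hx⟩ := by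
    have hρ' : R ρ ⟨x, hx⟩ = ⟨x, hx⟩ :=
      Subtype.ext ((AlgEquiv.restrictNormalHom_apply L ρ ⟨x, hx⟩).trans hρx)
    have hσ' : R σ ⟨x, hx⟩ = ⟨x, hx⟩ :=
      Subtype.ext ((AlgEquiv.restrictNormalHom_apply L σ ⟨x, hx⟩).trans hσx)
    have hp : ∀ n : ℕ, (R ρ ^ n) ⟨x, hx⟩ = ⟨x, hx⟩ := by
      intro n
      induction n with
      | zero => rfl
      | succ n ih => rw [pow_succ, AlgEquiv.mul_apply, hρ', ih]
    rintro (i | i)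
    · exact hp _
    · change (R σ * R ρ ^ i.val) ⟨x, hx⟩ = _
      rw [AlgEquiv.mul_apply, hp, hσ']
  obtain ⟨d, hd⟩ := hbij.2 (R φ)
  have := key d
  rw [hd] at this
  rw [← AlgEquiv.restrictNormalHom_apply L φ ⟨x, hx⟩]
  exact congrArg Subtype.val this

end Generic

/-! ### The Galois closure -/

lemma galCl_eq_iSup (K : IntermediateField ℚ Qbar) :
    galCl K = ⨆ f : Qbar ≃ₐ[ℚ] Qbar, K.map (f : Qbar →ₐ[ℚ] Qbar) := by
  rw [← normalClosure_def'' K]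
  unfold galCl
  congr 1

lemma galCl_normal (K : IntermediateField ℚ Qbar) : @Normal ℚ (galCl K) _ _ (galCl K).algebra' := by
  have h : Normal ℚ (galCl K) := normalClosure.normal ℚ K Qbar
  have e : (DivisionRing.toRatAlgebra : Algebra ℚ (galCl K)) = (galCl K).algebra' :=
    Subsingleton.elim _ _
  rwa [e] at h

/-- A subfield of `Qbar` carries two `ℚ`-algebra instances: the canonical one of a field of
characteristic zero and the one inherited from `Qbar`. They are propositionally equal, so the Galois
groups they define can be exchanged. -/
lemma gal_bridge {L : IntermediateField ℚ Qbar} {Γ : Type*} [Group Γ] :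
    Nonempty (@AlgEquiv ℚ L L _ _ _ L.algebra' L.algebra' ≃* Γ) ↔ Nonempty ((L ≃ₐ[ℚ] L) ≃* Γ) := by
  have e : (DivisionRing.toRatAlgebra : Algebra ℚ L) = L.algebra' := Subsingleton.elim _ _
  rw [e]

lemma isD4Quartic_iff (K : IntermediateField ℚ Qbar) : IsD4Quartic K ↔
    Module.finrank ℚ K = 4 ∧ Nonempty (@AlgEquiv ℚ (galCl K) (galCl K) _ _ _ (galCl K).algebra'
      (galCl K).algebra' ≃* DihedralGroup 4) := by
  rw [IsD4Quartic, gal_bridge]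

namespace D4Data

variable {a b G H N : ℚ} {s u t : Qbar}

/-- The Galois closure of `ℚ(t)` is `ℚ(t, √b)`, because the conjugates of `t` are `±t` and
`± N √b / t`. -/
lemma galCl_eq (D : D4Data a b G H N s u t) : galCl (adjoin ℚ {t}) = adjoin ℚ {t, u} := by
  have ht : t ∈ adjoin ℚ {t, u} := subset_adjoin _ _ (by simp)
  have hu : u ∈ adjoin ℚ {t, u} := subset_adjoin _ _ (by simp)
  have hN := D.NQ
  apply le_antisymm
  · rw [galCl_eq_iSup]
    refine iSup_le fun φ => ?_
    rw [adjoin_map, Set.image_singleton, adjoin_simple_le_iff]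
    have hc : (N : Qbar) * u / t ∈ adjoin ℚ {t, u} :=
      div_mem (mul_mem (ratCast_mem_field _ _) hu) ht
    change φ t ∈ _
    rcases D.map_s φ with h | h
    · rcases D.map_t_of_fix h with h | h <;> rw [h]
      exacts [ht, neg_mem ht]
    · rcases D.map_t_of_neg h with h | h <;> rw [h]
      exacts [hc, neg_mem hc]
  · have hmem : ∀ φ : Qbar ≃ₐ[ℚ] Qbar, φ t ∈ galCl (adjoin ℚ {t}) := by
      intro φ
      rw [galCl_eq_iSup]
      exact le_iSup (fun f : Qbar ≃ₐ[ℚ] Qbar => (adjoin ℚ {t}).map (f : Qbar →ₐ[ℚ] Qbar)) φ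
        ⟨t, mem_adjoin_simple_self ℚ t, rfl⟩
    have ht' := hmem 1
    obtain ⟨ρ, h1, -, -⟩ := D.exists_rho
    have hρ := hmem ρ
    rw [adjoin_le_iff]
    rintro x (rfl | hx)
    · exact ht'
    · rw [Set.mem_singleton_iff] at hx
      have : x = ρ t * t / N := by
        rw [h1, hx]; have := D.t_ne; field_simp
      rw [this]
      exact div_mem (mul_mem hρ ht') (ratCast_mem_field _ _)

lemma finrank_le_four (D : D4Data a b G H N s u t) : Module.finrank ℚ (adjoin ℚ {t}) ≤ 4 := by
  have := finrank_adjoin_le (x := t)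
    (Polynomial.X ^ 4 + (Polynomial.C (-2 * G) * Polynomial.X ^ 2 + Polynomial.C (N ^ 2 * b)))
    (by monicity!) (by
      have h1 := D.sq_t
      have h2 := D.normQ
      have h3 := D.sq_s
      simp only [map_add, map_mul, map_pow, Polynomial.aeval_X, Polynomial.aeval_C, eq_ratCast]
      push_cast
      have h4 : t ^ 4 = ((G : Qbar) + H * s) ^ 2 := by rw [← h1]; ring
      rw [h4, h1]
      linear_combination (H : Qbar) ^ 2 * h3 - h2)
  refine this.trans (le_of_eq ?_)
  compute_degree!

end D4Data

/-! ### The Galois group and the extended quadratic fields -/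

lemma IsD4Quartic.finrank_galCl {K : IntermediateField ℚ Qbar} (hK : IsD4Quartic K)
    [FiniteDimensional ℚ (galCl K)] : Module.finrank ℚ (galCl K) = 8 := by
  have h := ((isD4Quartic_iff K).1 hK).2
  have hn := galCl_normal K
  exact @finrank_eq_eight_of_gal ℚ Qbar _ _ _ (galCl K) _ (@IsGalois.mk _ _ _ _ _ inferInstance hn) h

lemma finiteDimensional_adjoin_pair (x y : Qbar) : FiniteDimensional ℚ (adjoin ℚ {x, y}) := by
  apply IntermediateField.finiteDimensional_adjoin
  intro z _
  exact Algebra.IsIntegral.isIntegral z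

lemma pow_apply_neg {x : Qbar} {ρ : Qbar ≃ₐ[ℚ] Qbar} (h : ρ x = -x) (n : ℕ) :
    (ρ ^ n) x = (-1) ^ n * x := by
  induction n with
  | zero => simp
  | succ n ih => rw [pow_succ, AlgEquiv.mul_apply, h, map_neg, ih]; ring

namespace D4Data

variable {a b G H N : ℚ} {s u t : Qbar}

lemma conj_mem : (N : Qbar) * u / t ∈ adjoin ℚ {t, u} :=
  div_mem (mul_mem (ratCast_mem_field _ _) (subset_adjoin _ _ (by simp)))
    (subset_adjoin _ _ (by simp))

lemma s_mem_K (D : D4Data a b G H N s u t) : s ∈ adjoin ℚ {t} := by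
  rw [D.s_eq]
  exact div_mem (sub_mem (pow_mem (mem_adjoin_simple_self ℚ t) _) (ratCast_mem_field _ _))
    (ratCast_mem_field _ _)

lemma K_le_L : adjoin ℚ {t} ≤ adjoin ℚ {t, u} := adjoin.mono _ _ _ (by simp)

lemma s_mem_L (D : D4Data a b G H N s u t) : s ∈ adjoin ℚ {t, u} := K_le_L D.s_mem_K

lemma u_mem_L : u ∈ adjoin ℚ {t, u} := subset_adjoin _ _ (by simp)

lemma t_mem_L : t ∈ adjoin ℚ {t, u} := subset_adjoin _ _ (by simp)

lemma finrank_L_le (D : D4Data a b G H N s u t) :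
    Module.finrank ℚ (adjoin ℚ {t, u}) ≤ Module.finrank ℚ (adjoin ℚ {t}) * 2 := by
  have h : adjoin ℚ {t, u} = adjoin ℚ {t} ⊔ adjoin ℚ {u} := by
    rw [← adjoin_union, Set.singleton_union]
  rw [h]
  exact (IntermediateField.finrank_sup_le _ _).trans
    (Nat.mul_le_mul_left _ (finrank_adjoin_sqrt_le D.sq_u))

/-- `ℚ(t)` is a `D₄`-quartic field whose Galois closure has degree `8` and Galois group generated by
the rotation `ρ` and the reflection `σ`. The degree of `ℚ(t)` is forced: it is at most `4`, and the
octic closure is obtained from it by adjoining one square root. -/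
lemma main_gal (D : D4Data a b G H N s u t) : IsD4Quartic (adjoin ℚ {t}) ∧ Module.finrank ℚ (adjoin ℚ {t, u}) = 8 ∧
    ∃ ρ σ : Qbar ≃ₐ[ℚ] Qbar, (ρ t = N * u / t ∧ ρ u = -u ∧ ρ s = -s) ∧
      (σ t = t ∧ σ u = -u ∧ σ s = s) ∧
      ∀ x ∈ adjoin ℚ {t, u}, ρ x = x → σ x = x → x ∈ (⊥ : IntermediateField ℚ Qbar) := by
  obtain ⟨ρ, r1, r2, r3⟩ := D.exists_rho
  obtain ⟨σ, s1, s2, s3⟩ := D.exists_sigma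
  have hfd := finiteDimensional_adjoin_pair t u
  have hn := galCl_normal (adjoin ℚ {t})
  have hN := D.NQ
  have hu := D.u_ne
  have hs := D.s_ne
  have ht := D.t_ne
  have r4 : ρ (N * u / t) = -t := by rw [map_conj, r1, r2]; field_simp
  have rr : ρ (ρ t) = -t := by rw [r1, r4]
  rw [D.galCl_eq] at hn
  obtain ⟨h1, h2, h3⟩ := dihedral_gal (adjoin ℚ {t, u})
    (D.finrank_L_le.trans (Nat.mul_le_mul_right 2 D.finrank_le_four)) ρ σ
    (fun x hx => agree_of_agree_gens (φ := ρ * (ρ * (ρ * ρ))) (ψ := 1)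
      (by simp [AlgEquiv.mul_apply, -map_div₀, -map_mul, r1, r4])
      (by simp [AlgEquiv.mul_apply, r2]) hx)
    (fun x hx => agree_of_agree_gens (φ := σ * σ) (ψ := 1)
      (by simp [AlgEquiv.mul_apply, s1]) (by simp [AlgEquiv.mul_apply, s2]) hx)
    (fun x hx => agree_of_agree_gens (φ := ρ * (σ * ρ)) (ψ := σ)
      (by
        have : σ (N * u / t) = -(N * u / t) := by rw [map_conj, s1, s2]; ring
        simp only [AlgEquiv.mul_apply]
        rw [r1, this, map_neg, r4, s1, neg_neg])
      (by simp [AlgEquiv.mul_apply, r2, s2]) hx)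
    ⟨t, t_mem_L, by rw [rr]; exact fun h => ht (self_eq_neg.1 h.symm)⟩
    (by
      intro n
      rcases Nat.even_or_odd n with hn | hn
      · refine ⟨u, u_mem_L, ?_⟩
        rw [pow_apply_neg r2, hn.neg_one_pow, one_mul, s2]
        exact fun h => hu (self_eq_neg.1 h.symm)
      · refine ⟨s, D.s_mem_L, ?_⟩
        rw [pow_apply_neg r3, hn.neg_one_pow, neg_one_mul, map_neg, s3]
        exact fun h => hs (self_eq_neg.1 h.symm))
  refine ⟨?_, h2, ρ, σ, ⟨r1, r2, r3⟩, ⟨s1, s2, s3⟩, ?_⟩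
  · rw [isD4Quartic_iff, D.galCl_eq]
    refine ⟨?_, h1⟩
    have := D.finrank_L_le
    have := D.finrank_le_four
    omega
  · intro x hx hρ hσ
    rw [InfiniteGalois.mem_bot_iff_fixed]
    exact fun φ => h3 φ x hx hρ hσ

lemma isD4 (D : D4Data a b G H N s u t) : IsD4Quartic (adjoin ℚ {t}) := D.main_gal.1
lemma finrank_K (D : D4Data a b G H N s u t) : Module.finrank ℚ (adjoin ℚ {t}) = 4 := D.isD4.1
lemma finrank_L (D : D4Data a b G H N s u t) : Module.finrank ℚ (adjoin ℚ {t, u}) = 8 := D.main_gal.2.1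

/-- The octic field has only the quadratic subfields `ℚ(√a)`, `ℚ(√b)`, `ℚ(√(ab))`: if `d = √q`
generates a quadratic subfield, then `ρ` and `σ` act on `d` by signs, and one of `√a`, `√b`, `√a√b`
has the same signs, so that its quotient by `d` is rational. -/
lemma quadratic_cases (D : D4Data a b G H N s u t) {F : IntermediateField ℚ Qbar} (hF : Module.finrank ℚ F = 2)
    (hFL : F ≤ adjoin ℚ {t, u}) : s ∈ F ∨ u ∈ F ∨ s * u ∈ F := by
  obtain ⟨d, hdF, hd, q, hq⟩ := exists_sqrt_of_finrank_two hF
  obtain ⟨-, -, ρ, σ, ⟨-, r2, r3⟩, ⟨-, s2, s3⟩, hfix⟩ := D.main_gal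
  have hd0 : d ≠ 0 := fun h => hd (h ▸ zero_mem _)
  -- if `x / d` is rational then `x ∈ F`
  have key : ∀ x ∈ adjoin ℚ {t, u}, ρ (x / d) = x / d → σ (x / d) = x / d → x ∈ F := by
    intro x hx hρ hσ
    have h := hfix _ (div_mem hx (hFL hdF)) hρ hσ
    have : x = x / d * d := by field_simp
    rw [this]
    exact mul_mem ((bot_le : ⊥ ≤ F) h) hdF
  rcases map_sqrt hq ρ with hρ | hρ <;> rcases map_sqrt hq σ with hσ | hσ
  · exact absurd (hfix d (hFL hdF) hρ hσ) hd
  · right; right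
    apply key _ (mul_mem D.s_mem_L u_mem_L) <;> simp [hρ, hσ, r2, r3, s2, s3]
  · left
    apply key _ D.s_mem_L <;> simp [hρ, hσ, r3, s3]
  · right; left
    apply key _ u_mem_L <;> simp [hρ, hσ, r2, s2]

lemma u_notMem_K (D : D4Data a b G H N s u t) : u ∉ adjoin ℚ {t} := by
  intro hu
  have hle : adjoin ℚ {t, u} ≤ adjoin ℚ {t} := by
    rw [adjoin_le_iff]
    rintro x (rfl | hx)
    · exact mem_adjoin_simple_self ℚ _
    · rw [Set.mem_singleton_iff] at hx; rwa [hx]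
  have h4 := D.finrank_K
  have h8 := D.finrank_L
  rw [le_antisymm hle K_le_L] at h8
  omega

lemma su_notMem_K (D : D4Data a b G H N s u t) : s * u ∉ adjoin ℚ {t} := by
  intro h
  apply D.u_notMem_K
  have := D.s_ne
  have e : u = s * u / s := by field_simp
  rw [e]
  exact div_mem h D.s_mem_K

/-- A quartic field `K'` containing `√a√b` is fixed by an automorphism inducing the central
involution of the octic field. Indeed some automorphism fixing `K'` moves the octic field, and as it
fixes `√a√b` it induces either the central involution or a rotation of order `4`, whose square is
the central involution. -/
lemma exists_central (D : D4Data a b G H N s u t) {K' : IntermediateField ℚ Qbar} (h4 : Module.finrank ℚ K' = 4)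
    (hw : s * u ∈ K') :
    ∃ ψ : Qbar ≃ₐ[ℚ] Qbar, (∀ x ∈ K', ψ x = x) ∧ ψ t = -t ∧ ψ u = u := by
  have hfd : FiniteDimensional ℚ K' := Module.finite_of_finrank_pos (by omega)
  have hex : ∃ ψ ∈ K'.fixingSubgroup, ¬ (ψ t = t ∧ ψ u = u) := by
    by_contra! h
    have hle : adjoin ℚ {t, u} ≤ K' := by
      rw [← InfiniteGalois.fixedField_fixingSubgroup K', adjoin_le_iff]
      rintro x (rfl | hx)
      · exact fun ψ => (h ψ.1 ψ.2).1
      · rw [Set.mem_singleton_iff] at hx; rw [hx]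
        exact fun ψ => (h ψ.1 ψ.2).2
    have := IntermediateField.finrank_le_of_le_right hle
    rw [D.finrank_L] at this
    omega
  obtain ⟨ψ, hψ, hne⟩ := hex
  rw [IntermediateField.mem_fixingSubgroup_iff] at hψ
  have hs := D.s_ne
  have hu := D.u_ne
  have ht := D.t_ne
  have hN := D.NQ
  have hsu : ψ s * ψ u = s * u := by rw [← map_mul]; exact hψ _ hw
  rcases D.map_s ψ with h1 | h1
  · have h2 : ψ u = u := by rw [h1] at hsu; exact mul_left_cancel₀ hs hsu
    rcases D.map_t_of_fix h1 with h3 | h3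
    · exact absurd ⟨h3, h2⟩ hne
    · exact ⟨ψ, hψ, h3, h2⟩
  · have h2 : ψ u = -u := by
      rw [h1] at hsu; exact mul_left_cancel₀ hs (by linear_combination -hsu)
    refine ⟨ψ * ψ, fun x hx => ?_, ?_, ?_⟩ <;> rw [AlgEquiv.mul_apply]
    · rw [hψ x hx, hψ x hx]
    · rcases D.map_t_of_neg h1 with h3 | h3
      · rw [h3, map_conj, h2, h3]; field_simp
      · rw [h3, map_neg, map_conj, h2, h3]; field_simp
    · rw [h2, map_neg, h2, neg_neg]

/-- `ℚ(√(ab))` is contained in no `D₄`-quartic subfield `K'` of the octic field. Otherwise `K'` would be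
fixed by the central involution, and so would all its conjugates and hence its Galois closure; but
by degrees that closure is the whole octic field. -/
lemma su_notMem_of_isD4 (D : D4Data a b G H N s u t) {K' : IntermediateField ℚ Qbar} (hK' : IsD4Quartic K')
    (hle : K' ≤ adjoin ℚ {t, u}) : s * u ∉ K' := by
  intro hw
  obtain ⟨ψ, hψ, h1, h2⟩ := D.exists_central hK'.1 hw
  have ht := D.t_ne
  -- `ψ` commutes with every automorphism on the octic field, hence fixes all conjugates of `K'`
  have hcomm : ∀ φ : Qbar ≃ₐ[ℚ] Qbar, ∀ x ∈ adjoin ℚ {t, u}, ψ (φ x) = φ (ψ x) := by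
    intro φ x hx
    refine agree_of_agree_gens (φ := ψ * φ) (ψ := φ * ψ) ?_ ?_ hx <;> simp only [AlgEquiv.mul_apply]
    · rw [h1, map_neg]
      rcases D.map_s φ with h | h
      · rcases D.map_t_of_fix h with h | h <;> simp [h, h1]
      · rcases D.map_t_of_neg h with h | h <;> simp [h, h1, h2, div_neg]
    · rw [h2]
      rcases D.map_u φ with h | h <;> simp [h, h2]
  have hfix : galCl K' ≤ fixedField (Subgroup.zpowers ψ) := by
    rw [galCl_eq_iSup]
    refine iSup_le fun φ => ?_
    rintro _ ⟨x, hx, rfl⟩ ⟨τ, hτ⟩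
    have h0 : ψ (φ x) = φ x := by rw [hcomm φ x (hle hx), hψ x hx]
    have : Subgroup.zpowers ψ ≤ MulAction.stabilizer (Qbar ≃ₐ[ℚ] Qbar) (φ x) := by
      rw [Subgroup.zpowers_le]; exact h0
    exact this hτ
  have hsub : galCl K' ≤ adjoin ℚ {t, u} := by
    rw [galCl_eq_iSup]
    refine iSup_le fun φ => (IntermediateField.map_mono _ hle).trans ?_
    have hn := galCl_normal (adjoin ℚ {t})
    rw [D.galCl_eq] at hn
    exact normal_iff_forall_map_le'.1 hn φ
  have hfd := finiteDimensional_adjoin_pair t u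
  have hfd' : FiniteDimensional ℚ (galCl K') :=
    Module.Finite.of_injective (IntermediateField.inclusion hsub).toLinearMap
      (IntermediateField.inclusion hsub).injective
  have heq : galCl K' = adjoin ℚ {t, u} :=
    IntermediateField.eq_of_le_of_finrank_eq hsub (by rw [hK'.finrank_galCl, D.finrank_L])
  have htm : t ∈ galCl K' := heq ▸ t_mem_L
  have := hfix htm ⟨ψ, Subgroup.mem_zpowers ψ⟩
  have h3 : ψ t = t := this
  rw [h1] at h3
  exact ht (self_eq_neg.1 h3.symm)

/-- `ℚ(t)` lies in `𝓕_{4,a}(a,b)`; the mirror field shows that `ℚ(√b)` is an extended quadratic field. -/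
theorem mem_F4a (D : D4Data a b G H N s u t) : adjoin ℚ {t} ∈ F4a s u := by
  have hs2 := finrank_adjoin_sqrt D.sq_s D.s_irr
  have hu2 := finrank_adjoin_sqrt D.sq_u D.u_irr
  refine ⟨⟨D.isD4, ?_, ?_⟩, adjoin_simple_le_iff.2 D.s_mem_K, ?_⟩
  · rw [D.galCl_eq, adjoin_le_iff]
    rintro x (rfl | hx)
    · exact D.s_mem_L
    · rw [Set.mem_singleton_iff] at hx; rw [hx]; exact u_mem_L
  · intro F
    unfold ExtendedQuadratic
    rw [D.galCl_eq]
    constructor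
    · rintro ⟨h1, h2, K', h3, h4, h5⟩
      rcases D.quadratic_cases h2 h1 with h | h | h
      · exact Or.inl (eq_adjoin_of_finrank_two h2 h D.s_irr)
      · exact Or.inr (eq_adjoin_of_finrank_two h2 h D.u_irr)
      · exact absurd (h5 h) (D.su_notMem_of_isD4 h3 h4)
    · rintro (rfl | rfl)
      · exact ⟨adjoin_simple_le_iff.2 D.s_mem_L, hs2, _, D.isD4, K_le_L,
          adjoin_simple_le_iff.2 D.s_mem_K⟩
      · exact ⟨adjoin_simple_le_iff.2 u_mem_L, hu2, _, D.mirror.isD4,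
          adjoin_simple_le_iff.2 (add_mem t_mem_L conj_mem),
          adjoin_simple_le_iff.2 D.mirror.s_mem_K⟩
  · intro F hF h2
    rcases D.quadratic_cases h2 (hF.trans K_le_L) with h | h | h
    · exact eq_adjoin_of_finrank_two h2 h D.s_irr
    · exact absurd (hF h) D.u_notMem_K
    · exact absurd (hF h) D.su_notMem_K

end D4Data

/-! ### The discriminant -/

/-- The field discriminant is bounded by the nonzero discriminant `d` of any family of `[K : ℚ]`
algebraic integers: `d` is the field discriminant times the square of the determinant expressing the
family in an integral basis. -/
lemma natAbs_discr_le_of_family {K : Type*} [Field K] [NumberField K] {n : ℕ}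
    (hK : Module.finrank ℚ K = n) (v : Fin n → NumberField.RingOfIntegers K) (d : ℤ) (hd : d ≠ 0)
    (hv : Algebra.discr ℚ (fun i => (v i : K)) = (d : ℚ)) :
    (NumberField.discr K).natAbs ≤ d.natAbs := by
  have hcard :
      Fintype.card (Module.Free.ChooseBasisIndex ℤ (NumberField.RingOfIntegers K)) = n := by
    rw [← Module.finrank_eq_card_chooseBasisIndex, NumberField.RingOfIntegers.rank, hK]
  let B := (NumberField.RingOfIntegers.basis K).reindex (Fintype.equivFinOfCardEq hcard)
  have hB : Algebra.discr ℤ B = NumberField.discr K := NumberField.discr_eq_discr K B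
  have h1 : Algebra.discr ℤ v = d := by
    have : ((Algebra.discr ℤ v : ℤ) : ℚ) = Algebra.discr ℚ (fun i => (v i : K)) := by
      rw [Algebra.discr_def, Algebra.discr_def, Int.cast_det]
      congr 1
      ext i j
      simp [Algebra.traceMatrix_apply, Algebra.traceForm_apply, Algebra.coe_trace_int]
    rw [hv] at this
    exact_mod_cast this
  have h2 : d = (B.toMatrix v).det ^ 2 * NumberField.discr K := by
    rw [← h1, ← hB, ← Algebra.discr_of_matrix_vecMul]
    congr 1
    exact (B.toMatrix_map_vecMul v).symm
  apply Int.natAbs_le_of_dvd_ne_zero _ hd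
  exact ⟨(B.toMatrix v).det ^ 2, h2.trans (mul_comm _ _)⟩

/-- If some automorphism of `Qbar` negates every conjugate of `x`, then the trace of `x` is equal to
its own negative, hence zero. -/
lemma trace_eq_zero_of_neg {K : Type*} [Field K] [NumberField K] (x : K) (φ : Qbar ≃ₐ[ℚ] Qbar)
    (h : ∀ f : K →ₐ[ℚ] Qbar, φ (f x) = -f x) : Algebra.trace ℚ K x = 0 := by
  have h1 := trace_eq_sum_embeddings (K := ℚ) (L := K) Qbar (x := x)
  have h2 : φ (algebraMap ℚ Qbar (Algebra.trace ℚ K x)) =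
      -algebraMap ℚ Qbar (Algebra.trace ℚ K x) := by
    rw [h1, map_sum, ← Finset.sum_neg_distrib]
    exact Finset.sum_congr rfl fun f _ => h f
  rw [AlgEquiv.commutes, self_eq_neg] at h2
  simpa using h2

namespace D4Data

/-- The bound given by the algebraic integers `1, √a, t, √a t`, whose Gram matrix for the trace form
has determinant `256 a² N² b`. Here `x` and `y` play the roles of `√a` and `t` in an abstract
quartic number field `K`. -/
lemma natAbs_discr_le {a b G H N : ℤ} {s u t : Qbar} (D : D4Data a b G H N s u t)
    (ha : a ≠ 0) (hb : b ≠ 0)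
    {K : Type*} [Field K] [NumberField K] (hK : Module.finrank ℚ K = 4) (x y : K)
    (hx : x ^ 2 = (a : K)) (hy : y ^ 2 = (G : K) + (H : K) * x) :
    (NumberField.discr K).natAbs ≤ (256 * a ^ 2 * N ^ 2 * b).natAbs := by
  have hN : N ≠ 0 := by exact_mod_cast D.N_ne
  obtain ⟨ρ, r1, r2, r3⟩ := D.exists_rho
  have r4 : ρ (((N : ℚ) : Qbar) * u / t) = -t := by
    have := D.NQ
    have := D.u_ne
    have := D.t_ne
    rw [map_conj, r1, r2]; field_simp
  -- the conjugates of `x` are negated by `ρ`, those of `y` and `x * y` by `ρ²`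
  have fx : ∀ f : K →ₐ[ℚ] Qbar, f x = s ∨ f x = -s := by
    intro f
    apply sq_eq_sq_iff_eq_or_eq_neg.1
    rw [← map_pow, hx, D.sq_s]; simp
  have fy : ∀ f : K →ₐ[ℚ] Qbar, ρ (ρ (f y)) = - f y := by
    intro f
    have hfy : f y ^ 2 = ((G : ℚ) : Qbar) + ((H : ℚ) : Qbar) * f x := by
      rw [← map_pow, hy]; simp
    rcases fx f with h | h <;> rw [h] at hfy
    · rw [← D.sq_t, sq_eq_sq_iff_eq_or_eq_neg] at hfy
      rcases hfy with h | h <;> rw [h]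
      · rw [r1, r4]
      · rw [map_neg, r1, map_neg, r4]
    · rw [mul_neg, ← sub_eq_add_neg, ← D.sq_conj, sq_eq_sq_iff_eq_or_eq_neg] at hfy
      rcases hfy with h | h <;> rw [h]
      · rw [r4, map_neg, r1]
      · rw [map_neg, r4, neg_neg, r1, neg_neg]
  have tx : Algebra.trace ℚ K x = 0 := by
    apply trace_eq_zero_of_neg x ρ
    intro f
    rcases fx f with h | h <;> rw [h] <;> simp [r3]
  have ty : Algebra.trace ℚ K y = 0 := trace_eq_zero_of_neg y (ρ * ρ) fy
  have txy : Algebra.trace ℚ K (x * y) = 0 := by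
    apply trace_eq_zero_of_neg _ (ρ * ρ)
    intro f
    rw [AlgEquiv.mul_apply, map_mul, map_mul, map_mul, fy]
    rcases fx f with h | h <;> rw [h] <;> simp [r3]
  have tr : ∀ p q r w : ℤ, Algebra.trace ℚ K ((p : K) + q * x + r * y + w * (x * y)) = 4 * p := by
    intro p q r w
    have e : (p : K) + q * x + r * y + w * (x * y)
        = algebraMap ℚ K p + (q : ℚ) • x + (r : ℚ) • y + (w : ℚ) • (x * y) := by
      simp [Algebra.smul_def]
    rw [e, map_add, map_add, map_add, map_smul, map_smul, map_smul, tx, ty, txy,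
      Algebra.trace_algebraMap, hK]
    simp
  have ix : IsIntegral ℤ x := by
    refine .of_pow (n := 2) (by norm_num) ?_
    rw [hx]; exact isIntegral_intCast _
  have iy : IsIntegral ℤ y := by
    refine .of_pow (n := 2) (by norm_num) ?_
    rw [hy]
    exact (isIntegral_intCast _).add ((isIntegral_intCast _).mul ix)
  refine natAbs_discr_le_of_family hK
    ![1, ⟨x, ix⟩, ⟨y, iy⟩, ⟨x * y, ix.mul iy⟩] _ (by positivity) ?_
  have hn : (G : ℚ) ^ 2 - H ^ 2 * a = N ^ 2 * b := D.norm
  have gram : Algebra.traceMatrix ℚ ![1, x, y, x * y] =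
      !![4, 0, 0, 0; 0, 4 * (a : ℚ), 0, 0; 0, 0, 4 * (G : ℚ), 4 * (H * a : ℚ);
        0, 0, 4 * (H * a : ℚ), 4 * (a * G : ℚ)] := by
    have T : ∀ z : K, ∀ p q r w : ℤ, z = (p : K) + q * x + r * y + w * (x * y) →
        Algebra.trace ℚ K z = 4 * p := fun z p q r w h => h ▸ tr p q r w
    ext i j
    rw [Algebra.traceMatrix_apply, Algebra.traceForm_apply]
    fin_cases i <;> fin_cases j <;> simp
    · exact (T _ 1 0 0 0 (by simp)).trans (by simp)
    · exact tx
    · exact ty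
    · exact txy
    · exact tx
    · exact (T _ a 0 0 0 (by push_cast; linear_combination hx)).trans (by simp)
    · exact txy
    · exact (T _ 0 0 a 0 (by push_cast; linear_combination y * hx)).trans (by simp)
    · exact ty
    · exact (T _ 0 0 0 1 (by push_cast; ring)).trans (by simp)
    · exact (T _ G H 0 0 (by push_cast; linear_combination hy)).trans (by simp)
    · exact (T _ (H * a) G 0 0 (by push_cast; linear_combination x * hy + (H : K) * hx)).trans
        (by simp)
    · exact txy
    · exact (T _ 0 0 a 0 (by push_cast; linear_combination y * hx)).trans (by simp)
    · exact (T _ (H * a) G 0 0 (by push_cast; linear_combination x * hy + (H : K) * hx)).trans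
        (by simp)
    · exact (T _ (a * G) (a * H) 0 0 (by
        push_cast
        linear_combination x ^ 2 * hy + ((G : K) + (H : K) * x) * hx)).trans (by simp)
  have hv : (fun i => ((![1, ⟨x, ix⟩, ⟨y, iy⟩, ⟨x * y, ix.mul iy⟩] :
      Fin 4 → NumberField.RingOfIntegers K) i : K)) = ![1, x, y, x * y] := by
    ext i; fin_cases i <;> rfl
  rw [hv, Algebra.discr_def, gram]
  simp [Matrix.det_succ_row_zero, Fin.sum_univ_succ]
  linear_combination (256 * (a : ℚ) ^ 2) * hn

end D4Data

/-! ### Arithmetic of the parameters -/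

/-- A square root of an integer that lies in `ℚ` makes the integer a perfect square. -/
lemma isSquare_of_mem_bot {x : Qbar} {c : ℤ} (hx : x ^ 2 = (c : Qbar))
    (h : x ∈ (⊥ : IntermediateField ℚ Qbar)) : IsSquare c := by
  obtain ⟨q, rfl⟩ := IntermediateField.mem_bot.1 h
  rw [eq_ratCast] at hx
  have hq : q ^ 2 = (c : ℚ) := by exact_mod_cast hx
  exact Rat.isSquare_intCast_iff.1 ⟨q, by rw [← hq, sq]⟩

lemma eq_one_of_squarefree_of_isSquare {c : ℤ} (hc : Squarefree c) (h : IsSquare c) : c = 1 := by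
  obtain ⟨r, rfl⟩ := h
  rcases Int.isUnit_iff.1 (hc r dvd_rfl) with rfl | rfl <;> rfl

/-- From `a b = k²` with `a` square-free, `k = a c` and so `b = a c²`; as `b` is square-free, `c² = 1`. -/
lemma eq_of_squarefree_of_isSquare_mul {a b : ℤ} (ha : Squarefree a) (hb : Squarefree b)
    (h : IsSquare (a * b)) : a = b := by
  obtain ⟨k, hk⟩ := h
  have hak : a ∣ k := (ha.dvd_pow_iff_dvd two_ne_zero).1 ⟨b, by rw [hk, sq]⟩
  obtain ⟨c, rfl⟩ := hak
  have hbc : b = c * c * a := mul_left_cancel₀ ha.ne_zero (by rw [hk]; ring)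
  rcases Int.isUnit_iff.1 (hb c ⟨a, hbc⟩) with rfl | rfl <;> simp [hbc]

lemma D4Data.absDisc_le {a b G H N : ℤ} {s u t : Qbar} (D : D4Data a b G H N s u t)
    (ha : a ≠ 0) (hb : b ≠ 0) :
    absDisc (adjoin ℚ {t}) ≤ (256 * a ^ 2 * N ^ 2 * b).natAbs := by
  have hf : Module.finrank ℚ (adjoin ℚ {t}) = 4 := D.finrank_K
  have hfd : FiniteDimensional ℚ (adjoin ℚ {t}) := Module.finite_of_finrank_pos (by omega)
  rw [absDisc, dif_pos hfd]
  have : NumberField (adjoin ℚ {t}) := ⟨⟩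
  refine D.natAbs_discr_le ha hb ?_ (⟨s, D.s_mem_K⟩ : adjoin ℚ {t})
    ⟨t, mem_adjoin_simple_self ℚ t⟩ ?_ ?_
  -- the two sides use different, provably equal, `ℚ`-module structures on the subfield
  · convert hf
  · ext; simpa using D.sq_s
  · ext; simpa using D.sq_t

/-- The bound on `m` says `256 n₀² m² |a|³ |b|³ ≤ X`, which is stronger than required since
`|a|, |b| ≥ 1`. -/
lemma disc_bound {a b n₀ : ℤ} (ha0 : a ≠ 0) (hb0 : b ≠ 0) (hn₀ : 0 < n₀) {X : ℝ} (hX : 0 ≤ X)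
    {m : ℕ} (hm : (m : ℝ) ≤ Real.sqrt X /
      (16 * (n₀ : ℝ) * Real.sqrt ((a.natAbs : ℝ) ^ 3 * (b.natAbs : ℝ) ^ 3))) :
    ((256 * a ^ 2 * (n₀ * m) ^ 2 * b).natAbs : ℝ) ≤ X := by
  have hA : (1 : ℝ) ≤ a.natAbs := by exact_mod_cast Int.natAbs_pos.2 ha0
  have hB : (1 : ℝ) ≤ b.natAbs := by exact_mod_cast Int.natAbs_pos.2 hb0
  have e : ((256 * a ^ 2 * (n₀ * m) ^ 2 * b).natAbs : ℝ)
      = 256 * (a.natAbs : ℝ) ^ 2 * (n₀ * m) ^ 2 * b.natAbs := by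
    simp only [Nat.cast_natAbs, Int.cast_abs, Int.cast_mul, Int.cast_pow, abs_mul, abs_pow]
    simp [abs_of_pos (show (0 : ℝ) < n₀ by exact_mod_cast hn₀)]
  rw [e]
  generalize (a.natAbs : ℝ) = A at *
  generalize (b.natAbs : ℝ) = B at *
  have hn : (0 : ℝ) < n₀ := by exact_mod_cast hn₀
  rw [le_div_iff₀ (by positivity)] at hm
  have h := pow_le_pow_left₀ (by positivity) hm 2
  rw [Real.sq_sqrt hX, mul_pow, mul_pow, Real.sq_sqrt (by positivity)] at h
  have h2 : A ^ 2 * B ≤ A ^ 3 * B ^ 3 := by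
    gcongr
    · norm_num
    · exact le_self_pow₀ hB (by norm_num)
  calc 256 * A ^ 2 * (n₀ * m) ^ 2 * B = (A ^ 2 * B) * (16 * (n₀ : ℝ) * m) ^ 2 := by ring
    _ ≤ (A ^ 3 * B ^ 3) * (16 * (n₀ : ℝ) * m) ^ 2 := by gcongr
    _ ≤ X := by linarith

/-- Proposition 3.5 (1): for every `m ∈ M_a(a,b;X)` the field
`K_[m] = ℚ(√(g₀m + h₀m√a))` lies in `𝓕_{4,a}(a,b)` and has `D_{K_[m]} ≤ X`;
i.e. `T_a(a,b;X) ⊆ 𝓕_{4,a}(a,b;X)`. -/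
theorem Tset_subset_F4aX
    (a b : ℤ) (ha : Squarefree a) (hb : Squarefree b) (hab : a ≠ b)
    (ha0 : a ≠ 0) (ha1 : a ≠ 1) (hb0 : b ≠ 0) (hb1 : b ≠ 1)
    (sa sb : Qbar) (hsa : sa ^ 2 = (a : Qbar)) (hsb : sb ^ 2 = (b : Qbar))
    (hne : (F4a sa sb).Nonempty)
    (g₀ h₀ n₀ : ℤ) (hg₀ : 0 ≤ g₀) (hh₀ : 0 < h₀) (hn₀ : 0 < n₀)
    (heq : g₀ ^ 2 - h₀ ^ 2 * a = n₀ ^ 2 * b)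
    (X : ℝ) (hX : 1 ≤ X) :
    ∀ m ∈ Mset a b n₀ X, ∀ t : Qbar,
      t ^ 2 = ((g₀ * m : ℤ) : Qbar) + ((h₀ * m : ℤ) : Qbar) * sa →
      adjoin ℚ {t} ∈ F4a sa sb ∧ (absDisc (adjoin ℚ {t}) : ℝ) ≤ X := by
  rintro m ⟨-, hm, -, hmX⟩ t ht
  have D : D4Data (a : ℤ) (b : ℤ) (g₀ * m : ℤ) (h₀ * m : ℤ) (n₀ * m : ℤ) sa sb t :=
    { sq_s := by simpa using hsa
      sq_u := by simpa using hsb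
      sq_t := by simpa using ht
      norm := by
        have h : (g₀ * m) ^ 2 - (h₀ * m) ^ 2 * a = (n₀ * m) ^ 2 * b := by
          linear_combination (m : ℤ) ^ 2 * heq
        exact_mod_cast h
      H_ne := by have : h₀ * m ≠ 0 := by positivity
                 exact_mod_cast this
      N_ne := by have : n₀ * m ≠ 0 := by positivity
                 exact_mod_cast this
      s_irr := fun h => ha1 (eq_one_of_squarefree_of_isSquare ha (isSquare_of_mem_bot hsa h))
      u_irr := fun h => hb1 (eq_one_of_squarefree_of_isSquare hb (isSquare_of_mem_bot hsb h))
      su_irr := fun h => hab (eq_of_squarefree_of_isSquare_mul ha hb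
        (isSquare_of_mem_bot (by rw [mul_pow, hsa, hsb, Int.cast_mul]) h)) }
  refine ⟨D.mem_F4a, ?_⟩
  calc (absDisc (adjoin ℚ {t}) : ℝ) ≤ ((256 * a ^ 2 * (n₀ * m) ^ 2 * b).natAbs : ℝ) := by
        exact_mod_cast D.absDisc_le ha0 hb0
    _ ≤ X := disc_bound ha0 hb0 hn₀ (by linarith) hmX
end
end

section
/- Let a, b be distinct square-free integers not equal to 0 or 1 with 𝓕_{4,a}(a,b) ≠ ∅, and let (g₀,h₀,n₀) be a fixed triple of integers with h₀, n₀ > 0, g₀ ≥ 0 and g₀² − h₀²·a = n₀²·b. If m₁, m₂ are distinct square-free positive integers coprime to |ab|, then the fields K_[m₁] = ℚ(√(g₀m₁ + h₀m₁√a)) and K_[m₂] = ℚ(√(g₀m₂ + h₀m₂√a)) are distinct subfields of the algebraic closure of ℚ. -/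
/-!
Write `α = g₀ + h₀√a` and `F = ℚ(√a)`, so that `tᵢ² = mᵢα`. The norm of `mᵢα` from `F` to `ℚ` is
`mᵢ²n₀²b`, which is not a rational square, so neither `tᵢ` lies in `F` (`root_notMem`). If
`t₂ ∈ ℚ(t₁)`, write `t₂ = u + v t₁` with `u, v ∈ F` (`exists_add_mul_of_mem_adjoin`); squaring forces
`uv = 0`, and then `u = 0` because `t₂ ∉ F`. Hence `m₂ = m₁v²` with `v = r + s√a`, which forces
`rs = 0`, so that `m₂ = m₁r²` or `m₂ = m₁a s²` in `ℚ`. As `m₁`, `m₁a` and `m₂` are square-free,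
this gives `m₂ = m₁` or `m₂ = m₁a` (`squarefree_eq_of_mul_sq_eq`). The latter makes `a`, which is
coprime to `m₂`, a unit, and positivity leaves only `a = 1`.
-/

open IntermediateField

noncomputable section

/-- A class in `ℚˣ` modulo squares contains at most one square-free integer. -/
theorem squarefree_eq_of_mul_sq_eq {c d : ℤ} (hc : Squarefree c) (hd : Squarefree d)
    {x : ℚ} (h : (c : ℚ) * x ^ 2 = d) : c = d := by
  have hq : (x.den : ℚ) ≠ 0 := by exact_mod_cast x.den_nz
  have h1 : c * x.num ^ 2 = d * (x.den : ℤ) ^ 2 := by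
    have : (c : ℚ) * x.num ^ 2 = d * (x.den : ℚ) ^ 2 := by
      rw [← h]
      nth_rewrite 2 [← Rat.num_div_den x]
      field_simp
    exact_mod_cast this
  have hcop : IsCoprime x.num (x.den : ℤ) := by
    rw [Int.isCoprime_iff_nat_coprime]
    simpa using x.reduced
  -- In lowest terms, the square of the numerator divides `d` and that of the denominator divides `c`.
  have hp : x.num * x.num ∣ d := by
    rw [← sq]
    exact (hcop.pow (m := 2) (n := 2)).dvd_of_dvd_mul_right ⟨c, by rw [← h1]; ring⟩
  have hr : (x.den : ℤ) * x.den ∣ c := by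
    rw [← sq]
    exact (hcop.symm.pow (m := 2) (n := 2)).dvd_of_dvd_mul_right ⟨d, by rw [h1]; ring⟩
  have e1 : x.num ^ 2 = 1 := Int.isUnit_sq (hd _ hp)
  have e2 : (x.den : ℤ) ^ 2 = 1 := Int.isUnit_sq (hc _ hr)
  rw [e1, e2] at h1
  simpa using h1

/-- If `t² ∈ F` then `F + F t` is a ring; hence it contains `ℚ(t)`. -/
theorem exists_add_mul_of_mem_adjoin (F : IntermediateField ℚ Qbar) {t x : Qbar}
    (ht : t ^ 2 ∈ F) (hx : x ∈ adjoin ℚ {t}) : ∃ u ∈ F, ∃ v ∈ F, x = u + v * t := by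
  have halg : IsAlgebraic ℚ t := (AlgebraicClosure.isAlgebraic ℚ).isAlgebraic t
  rw [← IntermediateField.mem_toSubalgebra, adjoin_simple_toSubalgebra_of_isAlgebraic halg] at hx
  induction hx using Algebra.adjoin_induction with
  | mem y hy =>
    rw [Set.mem_singleton_iff] at hy
    exact ⟨0, F.zero_mem, 1, F.one_mem, by rw [hy]; ring⟩
  | algebraMap r => exact ⟨algebraMap ℚ Qbar r, F.algebraMap_mem r, 0, F.zero_mem, by ring⟩
  | add y z _ _ hy hz =>
    obtain ⟨u, hu, v, hv, rfl⟩ := hy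
    obtain ⟨u', hu', v', hv', rfl⟩ := hz
    exact ⟨u + u', F.add_mem hu hu', v + v', F.add_mem hv hv', by ring⟩
  | mul y z _ _ hy hz =>
    obtain ⟨u, hu, v, hv, rfl⟩ := hy
    obtain ⟨u', hu', v', hv', rfl⟩ := hz
    exact ⟨u * u' + v * v' * t ^ 2,
      F.add_mem (F.mul_mem hu hu') (F.mul_mem (F.mul_mem hv hv') ht),
      u * v' + v * u', F.add_mem (F.mul_mem hu hv') (F.mul_mem hv hu'), by ring⟩

theorem exists_rat_of_mem_adjoin {a : ℤ} {sa x : Qbar} (hsa : sa ^ 2 = (a : Qbar))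
    (hx : x ∈ adjoin ℚ {sa}) : ∃ r s : ℚ, x = (r : Qbar) + (s : Qbar) * sa := by
  obtain ⟨u, hu, v, hv, rfl⟩ := exists_add_mul_of_mem_adjoin ⊥
    (by rw [hsa]; exact intCast_mem _ a) hx
  obtain ⟨r, rfl⟩ := IntermediateField.mem_bot.1 hu
  obtain ⟨s, rfl⟩ := IntermediateField.mem_bot.1 hv
  exact ⟨r, s, by simp⟩

/-- Linear independence of `1, √a` over `ℚ`. -/
theorem rat_add_mul_sqrt_inj {a : ℤ} (ha : Squarefree a) (ha1 : a ≠ 1) {sa : Qbar}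
    (hsa : sa ^ 2 = (a : Qbar)) {p q r s : ℚ}
    (h : (p : Qbar) + (q : Qbar) * sa = (r : Qbar) + (s : Qbar) * sa) : p = r ∧ q = s := by
  have hqs : q = s := by
    by_contra hne
    have hne' : q - s ≠ 0 := sub_ne_zero.2 hne
    have h2 : (q - s) ^ 2 * a = (r - p) ^ 2 := by
      have : ((q : Qbar) - s) ^ 2 * a = ((r : Qbar) - p) ^ 2 := by
        rw [← hsa]
        linear_combination (((q : Qbar) - s) * sa + (r - p)) * h
      exact_mod_cast this
    refine ha1 (squarefree_eq_of_mul_sq_eq (x := (r - p) / (q - s)) squarefree_one ha ?_).symm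
    rw [div_pow, ← h2]
    field_simp
    simp
  subst hqs
  exact ⟨by exact_mod_cast add_right_cancel h, rfl⟩

/-- The norm of `m(g + h√a)` is `m²n²b`, which is not a square, so `m(g + h√a)` is not a square in
`ℚ(√a)`. -/
theorem root_notMem {a b : ℤ} (ha : Squarefree a) (ha1 : a ≠ 1) (hb : Squarefree b) (hb1 : b ≠ 1)
    {sa : Qbar} (hsa : sa ^ 2 = (a : Qbar)) {g h n : ℤ} (hn : 0 < n)
    (heq : g ^ 2 - h ^ 2 * a = n ^ 2 * b) {m : ℕ} (hm : 0 < m) {t : Qbar}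
    (ht : t ^ 2 = ((g * m : ℤ) : Qbar) + ((h * m : ℤ) : Qbar) * sa) :
    t ∉ adjoin ℚ {sa} := by
  intro hmem
  obtain ⟨r, s, rfl⟩ := exists_rat_of_mem_adjoin hsa hmem
  have hcast : ((r ^ 2 + s ^ 2 * a : ℚ) : Qbar) + ((2 * r * s : ℚ) : Qbar) * sa =
      ((g * m : ℚ) : Qbar) + ((h * m : ℚ) : Qbar) * sa := by
    push_cast at ht ⊢
    linear_combination ht - (s : Qbar) ^ 2 * hsa
  obtain ⟨e1, e2⟩ := rat_add_mul_sqrt_inj ha ha1 hsa hcast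
  have hq : (g : ℚ) ^ 2 - h ^ 2 * a = n ^ 2 * b := by exact_mod_cast heq
  have hm0 : (m : ℚ) ≠ 0 := by exact_mod_cast hm.ne'
  have hn0 : (n : ℚ) ≠ 0 := by exact_mod_cast hn.ne'
  refine hb1 (squarefree_eq_of_mul_sq_eq (x := (r ^ 2 - s ^ 2 * a) / (m * n))
    squarefree_one hb ?_).symm
  have hnorm : (r ^ 2 - s ^ 2 * a) ^ 2 = (m * n : ℚ) ^ 2 * b := by
    linear_combination (r ^ 2 + s ^ 2 * a + g * m) * e1 - a * (2 * r * s + h * m) * e2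
      + (m : ℚ) ^ 2 * hq
  rw [div_pow, hnorm]
  field_simp
  simp

/-- Proposition 3.5 (2): for distinct square-free positive integers
`m₁, m₂` coprime to `|ab|`, the fields `K_[m₁]` and `K_[m₂]` are distinct. -/
theorem Km_injective
    (a b : ℤ) (ha : Squarefree a) (hb : Squarefree b) (hab : a ≠ b)
    (ha0 : a ≠ 0) (ha1 : a ≠ 1) (hb0 : b ≠ 0) (hb1 : b ≠ 1)
    (sa sb : Qbar) (hsa : sa ^ 2 = (a : Qbar)) (hsb : sb ^ 2 = (b : Qbar))
    (hne : (F4a sa sb).Nonempty)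
    (g₀ h₀ n₀ : ℤ) (hg₀ : 0 ≤ g₀) (hh₀ : 0 < h₀) (hn₀ : 0 < n₀)
    (heq : g₀ ^ 2 - h₀ ^ 2 * a = n₀ ^ 2 * b)
    (m₁ m₂ : ℕ) (hm₁ : Squarefree m₁) (hm₂ : Squarefree m₂)
    (hm₁0 : 0 < m₁) (hm₂0 : 0 < m₂)
    (hcop₁ : Nat.Coprime m₁ (a * b).natAbs) (hcop₂ : Nat.Coprime m₂ (a * b).natAbs)
    (hmm : m₁ ≠ m₂)
    (t₁ t₂ : Qbar)
    (ht₁ : t₁ ^ 2 = ((g₀ * m₁ : ℤ) : Qbar) + ((h₀ * m₁ : ℤ) : Qbar) * sa)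
    (ht₂ : t₂ ^ 2 = ((g₀ * m₂ : ℤ) : Qbar) + ((h₀ * m₂ : ℤ) : Qbar) * sa) :
    adjoin ℚ {t₁} ≠ adjoin ℚ {t₂} := by
  intro hK
  have hmem : t₂ ∈ adjoin ℚ {t₁} := hK ▸ mem_adjoin_simple_self ℚ t₂
  have hsaF : sa ∈ adjoin ℚ {sa} := mem_adjoin_simple_self ℚ sa
  have n1 := root_notMem ha ha1 hb hb1 hsa hn₀ heq hm₁0 ht₁
  have n2 := root_notMem ha ha1 hb hb1 hsa hn₀ heq hm₂0 ht₂
  have hsq (m : ℕ) : ((g₀ * m : ℤ) : Qbar) + ((h₀ * m : ℤ) : Qbar) * sa ∈ adjoin ℚ {sa} :=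
    add_mem (intCast_mem _ _) (mul_mem (intCast_mem _ _) hsaF)
  obtain ⟨u, hu, v, hv, e⟩ :=
    exists_add_mul_of_mem_adjoin (adjoin ℚ {sa}) (by rw [ht₁]; exact hsq m₁) hmem
  have hv0 : v ≠ 0 := by
    rintro rfl
    exact n2 (by rw [e]; simpa using hu)
  have hu0 : u = 0 := by
    by_contra hu0
    refine n1 ?_
    -- Otherwise `t₁ = (t₂² - u² - v²t₁²) / (2uv)` would lie in `ℚ(√a)`.
    have : t₁ = (t₂ ^ 2 - u ^ 2 - v ^ 2 * t₁ ^ 2) / (2 * u * v) := by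
      rw [e]
      field_simp
      ring
    rw [this, ht₁, ht₂]
    exact div_mem (sub_mem (sub_mem (hsq m₂) (pow_mem hu 2)) (mul_mem (pow_mem hv 2) (hsq m₁)))
      (mul_mem (mul_mem (ofNat_mem _ 2) hu) hv)
  have ht0 : t₁ ≠ 0 := fun h0 => n1 (h0 ▸ zero_mem _)
  have hm₁q : (m₁ : Qbar) ≠ 0 := by exact_mod_cast hm₁0.ne'
  have hα : (g₀ : Qbar) + h₀ * sa ≠ 0 := by
    intro h0
    refine pow_ne_zero 2 ht0 ?_
    rw [ht₁]
    push_cast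
    linear_combination (m₁ : Qbar) * h0
  have hvm : (m₁ : Qbar) * v ^ 2 = m₂ := by
    refine mul_right_cancel₀ hα ?_
    rw [e, hu0] at ht₂
    push_cast at ht₁ ht₂
    linear_combination ht₂ - v ^ 2 * ht₁
  obtain ⟨r, s, rfl⟩ := exists_rat_of_mem_adjoin hsa hv
  have hcast : ((m₁ * (r ^ 2 + s ^ 2 * a) : ℚ) : Qbar) + ((m₁ * (2 * r * s) : ℚ) : Qbar) * sa =
      ((m₂ : ℚ) : Qbar) + ((0 : ℚ) : Qbar) * sa := by
    push_cast
    linear_combination hvm - (m₁ : Qbar) * (s : Qbar) ^ 2 * hsa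
  obtain ⟨e1, e2⟩ := rat_add_mul_sqrt_inj ha ha1 hsa hcast
  have hs₁ : Squarefree (m₁ : ℤ) := Int.squarefree_natCast.2 hm₁
  have hs₂ : Squarefree (m₂ : ℤ) := Int.squarefree_natCast.2 hm₂
  have hca (m : ℕ) (hc : Nat.Coprime m (a * b).natAbs) : IsCoprime (m : ℤ) a := by
    rw [Int.isCoprime_iff_nat_coprime]
    rw [Int.natAbs_mul] at hc
    simpa using hc.coprime_mul_right_right
  have hrs : r = 0 ∨ s = 0 := by
    have : (m₁ : ℚ) ≠ 0 := by exact_mod_cast hm₁0.ne'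
    simpa [this] using e2
  rcases hrs with rfl | rfl
  · have hsf : Squarefree ((m₁ : ℤ) * a) :=
      (squarefree_mul_iff).2 ⟨(hca m₁ hcop₁).isRelPrime, hs₁, ha⟩
    have h1 : (m₁ : ℤ) * a = m₂ := squarefree_eq_of_mul_sq_eq (x := s) hsf hs₂ (by
      push_cast
      linear_combination e1)
    have hunit : IsUnit a :=
      (hca m₂ hcop₂).isUnit_of_dvd' ⟨m₁, by rw [← h1]; ring⟩ dvd_rfl
    rcases Int.isUnit_iff.1 hunit with h | h
    · exact ha1 h
    · rw [h] at h1
      lia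
  · have h1 : (m₁ : ℤ) = m₂ := squarefree_eq_of_mul_sq_eq (x := r) hs₁ hs₂ (by
      push_cast
      linear_combination e1)
    exact hmm (by exact_mod_cast h1)
end
end

section
/- Let a, b be rational numbers that are not squares in ℚ. Then b is a norm from ℚ(√a) (i.e., there exist x, y ∈ ℚ with x² − a·y² = b) if and only if a is a norm from ℚ(√b) (i.e., there exist u, v ∈ ℚ with u² − b·v² = a). -/
/-- A representation `x ^ 2 - a * y ^ 2 = b` must have `y ≠ 0`, as `b` is not a square;
dividing by `y ^ 2` and solving for `a` gives `a = (x / y) ^ 2 - b * (1 / y) ^ 2`. -/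
theorem norm_symmetry_aux (a b : ℚ) (hb : ¬ ∃ r : ℚ, r ^ 2 = b)
    (h : ∃ x y : ℚ, x ^ 2 - a * y ^ 2 = b) : ∃ u v : ℚ, u ^ 2 - b * v ^ 2 = a := by
  obtain ⟨x, y, hxy⟩ := h
  have hy : y ≠ 0 := by
    rintro rfl
    exact hb ⟨x, by linarith⟩
  refine ⟨x / y, 1 / y, ?_⟩
  rw [← hxy]
  field_simp
  ring

/-- for non-square rationals `a, b`, `b` is a norm from `ℚ(√a)` iff
`a` is a norm from `ℚ(√b)`. -/
theorem norm_symmetry (a b : ℚ) (ha : ¬ ∃ r : ℚ, r ^ 2 = a) (hb : ¬ ∃ r : ℚ, r ^ 2 = b) :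
    (∃ x y : ℚ, x ^ 2 - a * y ^ 2 = b) ↔ (∃ u v : ℚ, u ^ 2 - b * v ^ 2 = a) := by
  exact ⟨norm_symmetry_aux a b hb, norm_symmetry_aux b a ha⟩
end
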